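/- Let (X₁,Y₁),…,(X_m,Y_m) be i.i.d. with law P_S and assume E_S[Y⁴] < ∞. Let δ > 0, and let f̂ be any 𝓕-valued measurable function of the sample satisfying f̂(Xᵢ) ≥ Yᵢ² for all i = 1,…,m. Then for every t > 0, with probability at least 1 − e^{−t}, the conditional miscoverage p := P_S(Y² ≥ f̂(X) + δ) — computed with (X,Y) ~ P_S independent of the sample, at the realized value of f̂ — satisfies p ≤ (4/δ)·(√(E_S[Y⁴]/m) + R_m(𝓕)) + √(t/m), where R_m(𝓕) is the Rademacher complexity with respect to the covariate sample X₁,…,X_m. -/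

import Mathlib

/-!
The loss of a function `f` of the class at `(x, y)` is taken to be the ramp
`min(max((y² - f x) / δ, 0), 1)`. It dominates the indicator of the miscoverage event
`y² ≥ f x + δ`, and it vanishes at every sample point when `f` is feasible. Hence the miscoverage
of `fhat` is at most the uniform deviation
`Φ = sup_f (E[loss of f] - empirical loss of f)`, which is estimated in two parts.

* Concentration: changing one sample point moves `Φ` by at most `1 / m`, so McDiarmid's inequality
  (`mcdiarmid`) gives `Φ < E[Φ] + √(t/m)` outside an event of probability `exp (-2t)`.
* Expectation: symmetrization (`symmetrization`) bounds `E[Φ]` by twice a signed average of the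
  losses. The ramp is `1/δ`-Lipschitz in `f x`, and Talagrand's contraction principle
  (`contraction`) replaces the losses by the functions of the class, the response `y²` cancelling
  in all differences. This yields `E[Φ] ≤ (2/δ) R_m` (`expected_deviation_le`).

This bound implies the one claimed, since the moment term is nonnegative and
the constant `2/δ` is at most `4/δ`. The class is enumerated as a sequence, and expectations over
the signs are written as finite sums over `Fin m → Bool`.
-/

open MeasureTheory

/-- Rademacher complexity of a class `𝓖` of real functions with respect to `n` i.i.d.
points drawn from `ν`: `E[sup_{g∈𝓖} |(1/n) Σᵢ εᵢ g(Zᵢ)|]` where the `εᵢ` are i.i.d.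
uniform signs independent of the `Zᵢ`. -/
noncomputable def rademacher {𝒳 : Type*} [MeasurableSpace 𝒳]
    (n : ℕ) (𝓖 : Set (𝒳 → ℝ)) (ν : Measure 𝒳) : ℝ :=
  ∫ p : (Fin n → 𝒳) × (Fin n → Bool),
    sSup ((fun g : 𝒳 → ℝ =>
      |(1 / n : ℝ) * ∑ j, (if p.2 j then (1 : ℝ) else -1) * g (p.1 j)|) '' 𝓖)
    ∂((Measure.pi fun _ : Fin n => ν).prod
        (Measure.pi fun _ : Fin n => (PMF.uniformOfFintype Bool).toMeasure))

open ProbabilityTheory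

/-! ### Contraction -/

/-- The Rademacher sign of a Boolean. -/
noncomputable def sgn (b : Bool) : ℝ := if b then 1 else -1

lemma abs_sgn (b : Bool) : |sgn b| = 1 := by cases b <;> simp [sgn]

lemma sgn_not (b : Bool) : sgn (!b) = -sgn b := by cases b <;> simp [sgn]

lemma bddAbove_of_le {ι : Type*} {F : ι → ℝ} {C : ℝ} (h : ∀ k, F k ≤ C) :
    BddAbove (Set.range F) := ⟨C, by rintro _ ⟨k, rfl⟩; exact h k⟩

lemma abs_sum_sgn_le {m : ℕ} (ε : Fin m → Bool) (a : Fin m → ℝ) {C : ℝ}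
    (h : ∀ i, |a i| ≤ C) : |∑ i, sgn (ε i) * a i| ≤ m * C := by
  refine (Finset.abs_sum_le_sum_abs _ _).trans ?_
  refine (Finset.sum_le_sum (g := fun _ => C) fun i _ => ?_).trans (by simp)
  rw [abs_mul, abs_sgn, one_mul]
  exact h i

lemma abs_iSup_le {ι : Type*} [Nonempty ι] {F : ι → ℝ} {C : ℝ} (h : ∀ k, |F k| ≤ C) :
    |⨆ k, F k| ≤ C := by
  rw [abs_le]
  have k₀ : ι := Classical.arbitrary ι
  exact ⟨(abs_le.1 (h k₀)).1.trans (le_ciSup (bddAbove_of_le fun k => (abs_le.1 (h k)).2) k₀),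
    ciSup_le fun k => (abs_le.1 (h k)).2⟩

/-- The one-coordinate case of the contraction principle: both signs are averaged together, so
only the differences `a k - a l` enter, in absolute value. -/
lemma contraction_one {ι : Type*} [Nonempty ι] (D a b : ι → ℝ) {C : ℝ}
    (hD : ∀ k, |D k| ≤ C) (hb : ∀ k, |b k| ≤ C)
    (hab : ∀ k l, |a k - a l| ≤ |b k - b l|) :
    (⨆ k, (D k + a k)) + (⨆ k, (D k - a k)) ≤ (⨆ k, (D k + b k)) + ⨆ k, (D k - b k) := by
  have h1 : BddAbove (Set.range fun k => D k + b k) :=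
    bddAbove_of_le (C := C + C) fun k => add_le_add (abs_le.1 (hD k)).2 (abs_le.1 (hb k)).2
  have h2 : BddAbove (Set.range fun k => D k - b k) :=
    bddAbove_of_le (C := C + C) fun k => by
      have := (abs_le.1 (hD k)).2
      have := (abs_le.1 (hb k)).1
      linarith
  refine ciSup_add_ciSup_le fun k l => ?_
  have e1 := le_ciSup h1 k
  have e2 := le_ciSup h2 k
  have e3 := le_ciSup h1 l
  have e4 := le_ciSup h2 l
  have := le_abs_self (a k - a l)
  have := hab k l
  rcases abs_cases (b k - b l) with ⟨h, _⟩ | ⟨h, _⟩ <;> linarith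

lemma sum_cons_bool {m : ℕ} (F : (Fin (m + 1) → Bool) → ℝ) :
    ∑ ε, F ε = ∑ ε : Fin m → Bool, (F (Fin.cons true ε) + F (Fin.cons false ε)) := by
  rw [← (Fin.consEquiv fun _ : Fin (m + 1) => Bool).sum_comp F, Fintype.sum_prod_type,
    Fintype.sum_bool, ← Finset.sum_add_distrib]
  rfl

/-- Talagrand's contraction principle for signed sums without absolute values. The offset `c`
makes the induction over coordinates go through. -/
lemma contraction {ι : Type*} [Nonempty ι] {m : ℕ} (c : ι → ℝ) (a b : ι → Fin m → ℝ) {C K : ℝ}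
    (hc : ∀ k, |c k| ≤ K) (ha : ∀ k i, |a k i| ≤ C) (hb : ∀ k i, |b k i| ≤ C)
    (hab : ∀ k l i, |a k i - a l i| ≤ |b k i - b l i|) :
    ∑ ε : Fin m → Bool, ⨆ k, (c k + ∑ i, sgn (ε i) * a k i) ≤
      ∑ ε : Fin m → Bool, ⨆ k, (c k + ∑ i, sgn (ε i) * b k i) := by
  induction m generalizing c K with
  | zero => simp
  | succ m ih =>
    have hstep : ∀ s : Bool,
        ∑ ε : Fin m → Bool, ⨆ k, ((c k + sgn s * a k 0) + ∑ i, sgn (ε i) * a k (Fin.succ i)) ≤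
        ∑ ε : Fin m → Bool, ⨆ k, ((c k + sgn s * a k 0) + ∑ i, sgn (ε i) * b k (Fin.succ i)) := by
      intro s
      refine ih (fun k => c k + sgn s * a k 0) (fun k i => a k i.succ) (fun k i => b k i.succ)
        (K := K + C) (fun k => ?_)
        (fun k i => ha k _) (fun k i => hb k _) (fun k l i => hab k l _)
      refine (abs_add_le _ _).trans (add_le_add (hc k) ?_)
      rw [abs_mul, abs_sgn, one_mul]
      exact ha k 0
    rw [sum_cons_bool, sum_cons_bool]
    simp only [Fin.sum_univ_succ, Fin.cons_zero, Fin.cons_succ, ← add_assoc]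
    rw [Finset.sum_add_distrib]
    refine (add_le_add (hstep true) (hstep false)).trans ?_
    rw [← Finset.sum_add_distrib]
    refine Finset.sum_le_sum fun ε _ => ?_
    have := contraction_one (fun k => c k + ∑ i, sgn (ε i) * b k (Fin.succ i))
      (fun k => a k 0) (fun k => b k 0) (C := (K + m * C) + C)
      (fun k => by
        have h0 : 0 ≤ C := (abs_nonneg _).trans (ha k 0)
        have := (abs_add_le (c k) (∑ i, sgn (ε i) * b k (Fin.succ i))).trans
          (add_le_add (hc k) (abs_sum_sgn_le ε _ fun i => hb k i.succ))
        linarith)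
      (fun k => by
        have h0 : 0 ≤ K := (abs_nonneg _).trans (hc k)
        have h1 : 0 ≤ C := (abs_nonneg _).trans (ha k 0)
        have : 0 ≤ m * C := by positivity
        linarith [hb k 0]) (fun k l => hab k l 0)
    simp only [sgn, if_true, one_mul, Bool.false_eq_true, if_false, neg_one_mul] at this ⊢
    convert this using 3 <;> · ext k; ring_nf

/-! ### McDiarmid's inequality -/

lemma integrable_of_abs_le {α : Type*} [MeasurableSpace α] {μ : Measure α} [IsFiniteMeasure μ]
    {f : α → ℝ} (hf : Measurable f) {C : ℝ} (h : ∀ x, |f x| ≤ C) : Integrable f μ :=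
  Integrable.of_bound hf.aestronglyMeasurable C (ae_of_all _ h)

lemma integral_pi_succ {Z : Type*} [MeasurableSpace Z] (P : Measure Z) [IsProbabilityMeasure P]
    {n : ℕ} {F : (Fin (n + 1) → Z) → ℝ} (hF : Measurable F) {C : ℝ} (hC : ∀ s, |F s| ≤ C) :
    ∫ s, F s ∂(Measure.pi fun _ => P) =
      ∫ z, ∫ s, F (Fin.cons z s) ∂(Measure.pi fun _ : Fin n => P) ∂P := by
  have h := (measurePreserving_piFinSuccAbove (fun _ : Fin (n + 1) => P) 0).symm
  rw [← h.integral_comp']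
  rw [integral_prod]
  · simp [MeasurableEquiv.piFinSuccAbove, Fin.insertNthEquiv]
  · exact integrable_of_abs_le (hF.comp (MeasurableEquiv.measurable _)) fun x => hC _

lemma measurable_cons {Z : Type*} [MeasurableSpace Z] {n : ℕ} :
    Measurable fun p : Z × (Fin n → Z) => (Fin.cons p.1 p.2 : Fin (n + 1) → Z) := by
  refine measurable_pi_iff.2 fun i => ?_
  refine Fin.cases ?_ (fun j => ?_) i
  · simpa using measurable_fst
  · simp only [Fin.cons_succ]; fun_prop

/-- Hoeffding's lemma for a variable whose oscillation is at most `c`. -/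
lemma hoeffding_osc {Z : Type*} [MeasurableSpace Z] (P : Measure Z) [IsProbabilityMeasure P]
    {G : Z → ℝ} (hG : Measurable G) {c : ℝ} (hosc : ∀ z z', G z - G z' ≤ c) (l : ℝ) :
    ∫ z, Real.exp (l * (G z - ∫ z, G z ∂P)) ∂P ≤ Real.exp (c ^ 2 * l ^ 2 / 8) := by
  obtain ⟨z₀⟩ : Nonempty Z := P.nonempty_of_neZero
  have hbdd : BddBelow (Set.range G) :=
    ⟨G z₀ - c, by rintro _ ⟨z, rfl⟩; linarith [hosc z₀ z]⟩
  have : Nonempty Z := ⟨z₀⟩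
  have hmem : ∀ z, G z ∈ Set.Icc (⨅ z, G z) ((⨅ z, G z) + c) := fun z =>
    ⟨ciInf_le hbdd z, by
      have : G z - c ≤ ⨅ z, G z := le_ciInf fun z' => by linarith [hosc z z']
      linarith⟩
  have h := (hasSubgaussianMGF_of_mem_Icc (μ := P) hG.aemeasurable (ae_of_all _ hmem)).mgf_le l
  refine h.trans (le_of_eq ?_)
  congr 1
  simp only [add_sub_cancel_left, NNReal.coe_pow, NNReal.coe_div, coe_nnnorm, Real.norm_eq_abs,
    NNReal.coe_ofNat, div_pow, sq_abs]
  ring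

/-- Exponential-moment form of McDiarmid's inequality, by induction on the number of coordinates:
conditionally on the first coordinate the induction hypothesis applies, and the conditional
expectation, as a function of that coordinate, has oscillation at most `c`. -/
lemma mcdiarmid_mgf {Z : Type*} [MeasurableSpace Z] (P : Measure Z) [IsProbabilityMeasure P]
    {n : ℕ} {g : (Fin n → Z) → ℝ} (hg : Measurable g) {C c : ℝ} (hC : ∀ s, |g s| ≤ C)
    (hdiff : ∀ s i z, g (Function.update s i z) - g s ≤ c) (l : ℝ) :
    ∫ s, Real.exp (l * (g s - ∫ s, g s ∂(Measure.pi fun _ => P))) ∂(Measure.pi fun _ => P) ≤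
      Real.exp (n * (c ^ 2 * l ^ 2 / 8)) := by
  induction n generalizing C with
  | zero =>
    rw [Measure.pi_of_empty (fun _ : Fin 0 => P)]
    simp
  | succ n ih =>
    set Q := (Measure.pi fun _ : Fin n => P) with hQ
    set G : Z → ℝ := fun z => ∫ s, g (Fin.cons z s) ∂Q with hGdef
    have hgc : Measurable fun p : Z × (Fin n → Z) => g (Fin.cons p.1 p.2) :=
      hg.comp measurable_cons
    have hgz : ∀ z, Measurable fun s : Fin n → Z => g (Fin.cons z s) := fun z =>
      hgc.comp (measurable_const.prodMk measurable_id)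
    have hG : Measurable G :=
      (hgc.stronglyMeasurable.integral_prod_right').measurable
    have hGabs : ∀ z, |G z| ≤ C := fun z => by
      have := norm_integral_le_of_norm_le_const (μ := Q) (f := fun s => g (Fin.cons z s))
        (C := C) (ae_of_all _ fun s => hC _)
      simpa using this
    have hE : ∫ s, g s ∂(Measure.pi fun _ : Fin (n + 1) => P) = ∫ z, G z ∂P :=
      integral_pi_succ P hg hC
    have hEabs : |∫ z, G z ∂P| ≤ C := by
      have := norm_integral_le_of_norm_le_const (μ := P) (f := G) (C := C) (ae_of_all _ hGabs)
      simpa using this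
    have hosc : ∀ z z', G z - G z' ≤ c := by
      intro z z'
      have h1 : ∀ z, Integrable (fun s => g (Fin.cons z s)) Q := fun z =>
        integrable_of_abs_le (hgz z) fun s => hC _
      simp only [hGdef]
      rw [← integral_sub (h1 z) (h1 z')]
      have := integral_mono (μ := Q) ((h1 z).sub (h1 z')) (integrable_const c) (fun s => by
        have := hdiff (Fin.cons z' s) 0 z
        rwa [Fin.update_cons_zero] at this)
      simpa using this
    have hexp : ∀ x, |x| ≤ C + C → |Real.exp (l * x)| ≤ Real.exp (|l| * (C + C)) := by
      intro x hx
      rw [Real.abs_exp, Real.exp_le_exp]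
      calc l * x ≤ |l * x| := le_abs_self _
        _ = |l| * |x| := abs_mul _ _
        _ ≤ _ := by gcongr
    rw [hE, integral_pi_succ P (C := Real.exp (|l| * (C + C)))
      (by fun_prop) (fun s => hexp _ ((abs_sub _ _).trans (add_le_add (hC _) hEabs)))]
    calc ∫ z, ∫ s, Real.exp (l * (g (Fin.cons z s) - ∫ z, G z ∂P)) ∂Q ∂P
        = ∫ z, Real.exp (l * (G z - ∫ z, G z ∂P)) *
            ∫ s, Real.exp (l * (g (Fin.cons z s) - G z)) ∂Q ∂P := by
          congr 1; ext z
          rw [← integral_const_mul]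
          congr 1; ext s
          rw [← Real.exp_add]; congr 1; ring
      _ ≤ ∫ z, Real.exp (l * (G z - ∫ z, G z ∂P)) * Real.exp (n * (c ^ 2 * l ^ 2 / 8)) ∂P := by
          refine integral_mono_of_nonneg (ae_of_all _ fun z => ?_) ?_ (ae_of_all _ fun z => ?_)
          · exact mul_nonneg (Real.exp_nonneg _) (integral_nonneg fun s => Real.exp_nonneg _)
          · refine Integrable.mul_const ?_ _
            exact integrable_of_abs_le (by fun_prop)
              (fun s => hexp _ ((abs_sub _ _).trans (add_le_add (hGabs _) hEabs)))
          · refine mul_le_mul_of_nonneg_left ?_ (Real.exp_nonneg _)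
            refine ih (hgz z) (fun s => hC _) (fun s i z' => ?_)
            have := hdiff (Fin.cons z s) i.succ z'
            rwa [← Fin.cons_update] at this
      _ ≤ Real.exp (c ^ 2 * l ^ 2 / 8) * Real.exp (n * (c ^ 2 * l ^ 2 / 8)) := by
          rw [integral_mul_const]
          exact mul_le_mul_of_nonneg_right (hoeffding_osc P hG hosc l) (Real.exp_nonneg _)
      _ = _ := by
          rw [← Real.exp_add]; congr 1; push_cast; ring

/-- McDiarmid's inequality, with oscillation `1 / m` in every coordinate. -/
lemma mcdiarmid {Z : Type*} [MeasurableSpace Z] (P : Measure Z) [IsProbabilityMeasure P]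
    {m : ℕ} (hm : 0 < m) {g : (Fin m → Z) → ℝ} (hg : Measurable g) {C : ℝ} (hC : ∀ s, |g s| ≤ C)
    (hdiff : ∀ s i z, g (Function.update s i z) - g s ≤ 1 / m) {u : ℝ} (hu : 0 ≤ u) :
    (Measure.pi fun _ => P).real {s | u ≤ g s - ∫ s, g s ∂(Measure.pi fun _ => P)} ≤
      Real.exp (-2 * m * u ^ 2) := by
  have hm' : (0 : ℝ) < m := by exact_mod_cast hm
  -- The exponent `l ^ 2 / (8 m) - l u` is minimal at `l = 4 m u`.
  have hint : Integrable (fun s => Real.exp (4 * m * u *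
      (g s - ∫ s, g s ∂(Measure.pi fun _ => P)))) (Measure.pi fun _ => P) := by
    refine integrable_of_abs_le (by fun_prop)
      (C := Real.exp (4 * m * u * (C - ∫ s, g s ∂(Measure.pi fun _ => P)))) fun s => ?_
    rw [Real.abs_exp, Real.exp_le_exp]
    have := (abs_le.1 (hC s)).2
    gcongr
  refine (measure_ge_le_exp_mul_mgf u (t := 4 * m * u) (by positivity) hint).trans ?_
  refine (mul_le_mul_of_nonneg_left (mcdiarmid_mgf P hg hC hdiff (4 * m * u))
    (Real.exp_nonneg _)).trans (le_of_eq ?_)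
  rw [← Real.exp_add]; congr 1; field_simp; ring

/-! ### Symmetrization -/

/-- The signed empirical average `(1/m) ∑ εᵢ φ(sᵢ)`, maximised over the class `φ`. -/
noncomputable def signedSup {Z : Type*} {m : ℕ} (φ : ℕ → Z → ℝ) (ε : Fin m → Bool)
    (s : Fin m → Z) : ℝ :=
  ⨆ k, (1 / m : ℝ) * ∑ i, sgn (ε i) * φ k (s i)

lemma abs_signed_avg_le {m : ℕ} (hm : 0 < m) (ε : Fin m → Bool) (a : Fin m → ℝ) {C : ℝ}
    (h : ∀ i, |a i| ≤ C) : |(1 / m : ℝ) * ∑ i, sgn (ε i) * a i| ≤ C := by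
  have hm' : (0 : ℝ) < m := by exact_mod_cast hm
  rw [abs_mul, abs_of_pos (by positivity : (0 : ℝ) < 1 / m)]
  calc (1 / m : ℝ) * |∑ i, sgn (ε i) * a i| ≤ 1 / m * (m * C) := by
        gcongr; exact abs_sum_sgn_le ε a h
    _ = C := by field_simp

lemma measurable_signedSup {Z : Type*} [MeasurableSpace Z] {m : ℕ} {φ : ℕ → Z → ℝ}
    (hφ : ∀ k, Measurable (φ k)) (ε : Fin m → Bool) : Measurable (signedSup φ ε) := by
  unfold signedSup
  refine Measurable.iSup fun k => ?_
  have := hφ k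
  fun_prop

lemma integral_avg {Z : Type*} [MeasurableSpace Z] (P : Measure Z) [IsProbabilityMeasure P]
    {m : ℕ} (hm : 0 < m) {f : Z → ℝ} (hf : Measurable f) {C : ℝ} (hC : ∀ z, |f z| ≤ C) :
    ∫ s, (1 / m : ℝ) * ∑ i, f (s i) ∂(Measure.pi fun _ : Fin m => P) = ∫ z, f z ∂P := by
  have hm' : (0 : ℝ) < m := by exact_mod_cast hm
  rw [integral_const_mul, integral_finsetSum]
  · have : ∀ i : Fin m, ∫ s, f (s i) ∂(Measure.pi fun _ : Fin m => P) = ∫ z, f z ∂P := fun i =>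
      integral_comp_eval (μ := fun _ : Fin m => P) hf.aestronglyMeasurable
    simp only [this, Finset.sum_const, Finset.card_univ, Fintype.card_fin, nsmul_eq_mul]
    field_simp
  · intro i _
    exact integrable_of_abs_le (by fun_prop) fun s => hC _

/-- Exchanging the two samples in the coordinates where `ε` is `false` preserves `Pᵐ ⊗ Pᵐ`. -/
lemma measurePreserving_swapCoords {Z : Type*} [MeasurableSpace Z] (P : Measure Z)
    [IsProbabilityMeasure P] {m : ℕ} (ε : Fin m → Bool) :
    MeasurePreserving
      (fun p : (Fin m → Z) × (Fin m → Z) =>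
        ((fun i => if ε i then p.1 i else p.2 i, fun i => if ε i then p.2 i else p.1 i) :
          (Fin m → Z) × (Fin m → Z)))
      ((Measure.pi fun _ => P).prod (Measure.pi fun _ => P))
      ((Measure.pi fun _ => P).prod (Measure.pi fun _ => P)) := by
  have h1 := measurePreserving_arrowProdEquivProdArrow Z Z (Fin m) (fun _ => P) (fun _ => P)
  have h2 : MeasurePreserving
      (fun (w : Fin m → Z × Z) i => (if ε i then id else Prod.swap : Z × Z → Z × Z) (w i))
      (Measure.pi fun _ => P.prod P) (Measure.pi fun _ => P.prod P) := by
    refine measurePreserving_pi (fun _ => P.prod P) (fun _ => P.prod P)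
      (f := fun i => (if ε i then id else Prod.swap : Z × Z → Z × Z)) fun i => ?_
    cases ε i
    · exact Measure.measurePreserving_swap
    · exact MeasurePreserving.id _
  convert h1.comp (h2.comp h1.symm) using 1
  ext p i
  · cases h : ε i <;>
      simp [MeasurableEquiv.arrowProdEquivProdArrow, Equiv.arrowProdEquivProdArrow, h]
  · cases h : ε i <;>
      simp [MeasurableEquiv.arrowProdEquivProdArrow, Equiv.arrowProdEquivProdArrow, h]

/-- Symmetrization, with the average over the signs written as a finite sum. -/
lemma symmetrization {Z : Type*} [MeasurableSpace Z] (P : Measure Z) [IsProbabilityMeasure P]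
    {m : ℕ} (hm : 0 < m) {φ : ℕ → Z → ℝ} (hφ : ∀ k, Measurable (φ k)) {C : ℝ}
    (hC : ∀ k z, |φ k z| ≤ C) :
    ∫ s, ⨆ k, (∫ z, φ k z ∂P - (1 / m : ℝ) * ∑ i, φ k (s i)) ∂(Measure.pi fun _ : Fin m => P) ≤
      2 * ((1 / 2) ^ m * ∑ ε : Fin m → Bool,
        ∫ s, signedSup φ ε s ∂(Measure.pi fun _ : Fin m => P)) := by
  set Q := (Measure.pi fun _ : Fin m => P) with hQ
  have habs : ∀ k z z', |φ k z - φ k z'| ≤ C + C := fun k z z' =>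
    (abs_sub _ _).trans (add_le_add (hC _ _) (hC _ _))
  have havg : ∀ (k : ℕ) (s : Fin m → Z), |(1 / m : ℝ) * ∑ i, φ k (s i)| ≤ C := fun k s => by
    simpa [sgn] using abs_signed_avg_le hm (fun _ => true) (fun i => φ k (s i)) fun i => hC k _
  -- `H ε` is the symmetrized supremum; all `H ε` have the same integral.
  set H : (Fin m → Bool) → (Fin m → Z) × (Fin m → Z) → ℝ := fun ε p =>
    ⨆ k, (1 / m : ℝ) * ∑ i, sgn (ε i) * (φ k (p.2 i) - φ k (p.1 i)) with hH
  have hHm : ∀ ε, Measurable (H ε) := fun ε => Measurable.iSup fun k => by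
    have := hφ k
    fun_prop
  have hHb : ∀ ε p, |H ε p| ≤ C + C := fun ε p =>
    abs_iSup_le fun k => abs_signed_avg_le hm ε _ fun i => habs k _ _
  have hHi : ∀ ε, Integrable (H ε) (Q.prod Q) := fun ε => integrable_of_abs_le (hHm ε) (hHb ε)
  have hSi : ∀ ε, Integrable (signedSup φ ε) Q := fun ε =>
    integrable_of_abs_le (measurable_signedSup hφ ε) (C := C) fun s =>
      abs_iSup_le fun k => abs_signed_avg_le hm ε _ fun i => hC k _
  -- Jensen: the expectation over the ghost sample is pulled out of the supremum.
  have hghost : ∀ s, (⨆ k, (∫ z, φ k z ∂P - (1 / m : ℝ) * ∑ i, φ k (s i))) ≤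
      ∫ s', H (fun _ => true) (s, s') ∂Q := by
    intro s
    refine ciSup_le fun k => ?_
    have hφk := hφ k
    have hi : Integrable (fun s' : Fin m → Z => (1 / m : ℝ) * ∑ i, φ k (s' i)) Q :=
      integrable_of_abs_le (by fun_prop) (havg k)
    rw [← integral_avg P hm (hφ k) (hC k)]
    have : ∫ s' : Fin m → Z, ((1 / m : ℝ) * ∑ i, φ k (s' i) - (1 / m : ℝ) * ∑ i, φ k (s i)) ∂Q =
        ∫ s', (1 / m : ℝ) * ∑ i, φ k (s' i) ∂Q - (1 / m : ℝ) * ∑ i, φ k (s i) := by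
      rw [integral_sub hi (integrable_const _)]
      simp
    rw [← this]
    refine integral_mono (hi.sub (integrable_const _))
      (integrable_of_abs_le ((hHm _).comp measurable_prodMk_left) fun s' => hHb _ _) fun s' => ?_
    have hb : BddAbove (Set.range fun k =>
        (1 / m : ℝ) * ∑ i, sgn true * (φ k (s' i) - φ k (s i))) :=
      bddAbove_of_le (C := C + C) fun k =>
        (abs_le.1 (abs_signed_avg_le hm (fun _ => true) _ fun i => habs k _ _)).2
    refine le_trans (le_of_eq ?_) (le_ciSup hb k)
    simp [sgn, Finset.sum_sub_distrib, mul_sub]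
  have h1 : ∫ s, ⨆ k, (∫ z, φ k z ∂P - (1 / m : ℝ) * ∑ i, φ k (s i)) ∂Q ≤
      ∫ p, H (fun _ => true) p ∂(Q.prod Q) := by
    rw [integral_prod _ (hHi _)]
    refine integral_mono ?_ (hHi _).integral_prod_left hghost
    refine integrable_of_abs_le (Measurable.iSup fun k => ?_) (C := C + C) fun s =>
      abs_iSup_le fun k => (abs_sub _ _).trans (add_le_add ?_ (havg k s))
    · have := hφ k
      fun_prop
    · simpa using norm_integral_le_of_norm_le_const (μ := P) (f := φ k) (C := C) (ae_of_all _ (hC k))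
  have h2 : ∀ ε, ∫ p, H ε p ∂(Q.prod Q) = ∫ p, H (fun _ => true) p ∂(Q.prod Q) := by
    intro ε
    have hmp := measurePreserving_swapCoords P ε
    calc ∫ p, H ε p ∂(Q.prod Q) = ∫ p, H (fun _ => true)
            (fun i => if ε i then p.1 i else p.2 i, fun i => if ε i then p.2 i else p.1 i)
            ∂(Q.prod Q) := by
          refine integral_congr_ae (ae_of_all _ fun p => ?_)
          simp only [hH]
          congr 1; ext k; congr 1
          refine Finset.sum_congr rfl fun i _ => ?_
          cases h : ε i <;> simp [sgn]
      _ = ∫ p, H (fun _ => true) p ∂(Measure.map _ (Q.prod Q)) :=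
          (integral_map hmp.measurable.aemeasurable (hHm _).aestronglyMeasurable).symm
      _ = _ := by rw [hmp.map_eq]
  have h3 : ∀ ε, ∫ p, H ε p ∂(Q.prod Q) ≤
      ∫ s, signedSup φ ε s ∂Q + ∫ s, signedSup φ (fun i => !ε i) s ∂Q := by
    intro ε
    have e1 : ∫ p : (Fin m → Z) × (Fin m → Z), signedSup φ ε p.2 ∂(Q.prod Q) =
        ∫ s, signedSup φ ε s ∂Q := by
      simpa using integral_fun_snd (μ := Q) (ν := Q) (signedSup φ ε)
    have e2 : ∫ p : (Fin m → Z) × (Fin m → Z), signedSup φ (fun i => !ε i) p.1 ∂(Q.prod Q) =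
        ∫ s, signedSup φ (fun i => !ε i) s ∂Q := by
      simpa using integral_fun_fst (μ := Q) (ν := Q) (signedSup φ fun i => !ε i)
    have i1 : Integrable (fun p : (Fin m → Z) × (Fin m → Z) => signedSup φ ε p.2) (Q.prod Q) :=
      (hSi ε).comp_snd Q
    have i2 : Integrable (fun p : (Fin m → Z) × (Fin m → Z) => signedSup φ (fun i => !ε i) p.1)
      (Q.prod Q) := (hSi _).comp_fst Q
    rw [← e1, ← e2, ← integral_add i1 i2]
    refine integral_mono (hHi ε) (i1.add i2) fun p => ciSup_le fun k => ?_
    have b : ∀ (ε : Fin m → Bool) (s : Fin m → Z),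
        (1 / m : ℝ) * ∑ i, sgn (ε i) * φ k (s i) ≤ signedSup φ ε s := fun ε s =>
      le_ciSup (f := fun k => (1 / m : ℝ) * ∑ i, sgn (ε i) * φ k (s i))
        (bddAbove_of_le (C := C) fun k =>
          (abs_le.1 (abs_signed_avg_le hm ε _ fun i => hC k (s i))).2) k
    refine le_trans (le_of_eq ?_) (add_le_add (b ε p.2) (b (fun i => !ε i) p.1))
    rw [← mul_add, ← Finset.sum_add_distrib]
    congr 1
    refine Finset.sum_congr rfl fun i _ => ?_
    rw [sgn_not]; ring
  have hsum : ∑ ε : Fin m → Bool, ∫ p, H (fun _ => true) p ∂(Q.prod Q) ≤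
      ∑ ε : Fin m → Bool, (∫ s, signedSup φ ε s ∂Q + ∫ s, signedSup φ (fun i => !ε i) s ∂Q) :=
    Finset.sum_le_sum fun ε _ => (h2 ε).symm.le.trans (h3 ε)
  have hflip : ∑ ε : Fin m → Bool, ∫ s, signedSup φ (fun i => !ε i) s ∂Q =
      ∑ ε : Fin m → Bool, ∫ s, signedSup φ ε s ∂Q :=
    (Equiv.arrowCongr (Equiv.refl (Fin m)) Equiv.boolNot).sum_comp
      fun ε => ∫ s, signedSup φ ε s ∂Q
  rw [Finset.sum_add_distrib, hflip] at hsum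
  simp only [Finset.sum_const, Finset.card_univ, Fintype.card_pi, Fintype.card_bool,
    Finset.prod_const, Fintype.card_fin, nsmul_eq_mul, Nat.cast_pow, Nat.cast_ofNat] at hsum
  refine h1.trans ?_
  have h2m : (0 : ℝ) < (1 / 2) ^ m := by positivity
  have hone : ((1 : ℝ) / 2) ^ m * 2 ^ m = 1 := by rw [← mul_pow]; norm_num
  have := mul_le_mul_of_nonneg_left hsum h2m.le
  rw [← mul_assoc, hone] at this
  linarith

/-! ### Rademacher complexity of an enumerated class -/

/-- `sup_k |(1/m) ∑ εᵢ f_k(xᵢ)|`, the integrand of the Rademacher complexity. -/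
noncomputable def absSup {𝒳 : Type*} {m : ℕ} (f : ℕ → 𝒳 → ℝ) (ε : Fin m → Bool)
    (x : Fin m → 𝒳) : ℝ :=
  ⨆ k, |(1 / m : ℝ) * ∑ i, sgn (ε i) * f k (x i)|

lemma measurable_absSup {𝒳 : Type*} [MeasurableSpace 𝒳] {m : ℕ} {f : ℕ → 𝒳 → ℝ}
    (hf : ∀ k, Measurable (f k)) (ε : Fin m → Bool) : Measurable (absSup f ε) := by
  unfold absSup
  refine Measurable.iSup fun k => ?_
  have := hf k
  refine Measurable.abs ?_
  fun_prop

lemma abs_absSup_le {𝒳 : Type*} {m : ℕ} (hm : 0 < m) {f : ℕ → 𝒳 → ℝ} {B : ℝ}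
    (hB : ∀ k x, |f k x| ≤ B) (ε : Fin m → Bool) (x : Fin m → 𝒳) : |absSup f ε x| ≤ B :=
  abs_iSup_le fun k => by
    rw [abs_abs]
    exact abs_signed_avg_le hm ε _ fun i => hB k _

lemma rademacher_range {𝒳 : Type*} [MeasurableSpace 𝒳] (ν : Measure 𝒳) [IsProbabilityMeasure ν]
    {m : ℕ} (hm : 0 < m) {f : ℕ → 𝒳 → ℝ} (hf : ∀ k, Measurable (f k)) {B : ℝ}
    (hB : ∀ k x, |f k x| ≤ B) :
    rademacher m (Set.range f) ν =
      (1 / 2) ^ m * ∑ ε : Fin m → Bool, ∫ x, absSup f ε x ∂(Measure.pi fun _ : Fin m => ν) := by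
  have hrw : ∀ p : (Fin m → 𝒳) × (Fin m → Bool),
      sSup ((fun g : 𝒳 → ℝ =>
        |(1 / m : ℝ) * ∑ j, (if p.2 j then (1 : ℝ) else -1) * g (p.1 j)|) '' Set.range f) =
      absSup f p.2 p.1 := by
    intro p
    rw [← Set.range_comp]
    rfl
  unfold rademacher
  simp only [hrw]
  have hmeas : Measurable fun p : (Fin m → 𝒳) × (Fin m → Bool) => absSup f p.2 p.1 :=
    measurable_from_prod_countable_left fun ε => measurable_absSup hf ε
  rw [integral_prod_symm _ (integrable_of_abs_le hmeas fun p => abs_absSup_le hm hB _ _),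
    integral_fintype Integrable.of_finite, Finset.mul_sum]
  refine Finset.sum_congr rfl fun ε _ => ?_
  rw [smul_eq_mul]
  congr 1
  rw [measureReal_def, Measure.pi_singleton]
  simp

/-! ### Ramp losses -/

/-- The ramp `u ↦ min(max(u, 0), 1)`. -/
noncomputable def ramp (u : ℝ) : ℝ := max 0 (min 1 u)

lemma ramp_nonneg (u : ℝ) : 0 ≤ ramp u := le_max_left _ _

lemma ramp_le_one (u : ℝ) : ramp u ≤ 1 := max_le zero_le_one (min_le_left _ _)

lemma abs_ramp_le (u : ℝ) : |ramp u| ≤ 1 := by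
  rw [abs_of_nonneg (ramp_nonneg u)]; exact ramp_le_one u

lemma abs_ramp_sub_le (u v : ℝ) : |ramp u - ramp v| ≤ |u - v| := by
  have := abs_max_sub_max_le_max 0 (min 1 u) 0 (min 1 v)
  have := abs_min_sub_min_le_max 1 u 1 v
  simp only [sub_self, abs_zero, abs_nonneg, sup_of_le_right] at *
  unfold ramp
  linarith

lemma measurable_ramp : Measurable ramp := by
  unfold ramp; fun_prop

/-- Replacing one sample point moves the uniform deviation by at most `1 / m`. -/
lemma deviation_update {Z : Type*} {m : ℕ} {φ : ℕ → Z → ℝ}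
    (h0 : ∀ k z, 0 ≤ φ k z) (h1 : ∀ k z, φ k z ≤ 1) {e : ℕ → ℝ} {s : Fin m → Z}
    (hbdd : BddAbove (Set.range fun k => e k - (1 / m : ℝ) * ∑ i, φ k (s i)))
    (i : Fin m) (z : Z) :
    (⨆ k, (e k - (1 / m : ℝ) * ∑ j, φ k (Function.update s i z j))) -
      (⨆ k, (e k - (1 / m : ℝ) * ∑ j, φ k (s j))) ≤ 1 / m := by
  rw [sub_le_iff_le_add]
  refine ciSup_le fun k => ?_
  have hk := le_ciSup hbdd k
  have hsum : ∑ j, (φ k (s j) - φ k (Function.update s i z j)) ≤ 1 := by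
    calc ∑ j, (φ k (s j) - φ k (Function.update s i z j))
        ≤ ∑ j, (if j = i then (1 : ℝ) else 0) := by
          refine Finset.sum_le_sum fun j _ => ?_
          by_cases hj : j = i
          · subst hj
            simp only [Function.update_self, if_true]
            linarith [h0 k z, h1 k (s j)]
          · simp [hj]
      _ = 1 := by simp
  rw [Finset.sum_sub_distrib] at hsum
  have := mul_le_mul_of_nonneg_left hsum (by positivity : (0 : ℝ) ≤ 1 / m)
  rw [mul_sub, mul_one] at this
  linarith

/-- Contraction applied to the ramp losses: the response `y²` shifts all functions of the class
by the same amount at each sample point, hence disappears from the differences. -/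
lemma sum_signedSup_le {𝒳 : Type*} {m : ℕ} (hm : 0 < m) {f : ℕ → 𝒳 → ℝ} {B : ℝ}
    (hB : ∀ k x, |f k x| ≤ B) {δ : ℝ} (hδ : 0 < δ) (s : Fin m → 𝒳 × ℝ) :
    ∑ ε : Fin m → Bool, signedSup (fun k (q : 𝒳 × ℝ) => ramp ((q.2 ^ 2 - f k q.1) / δ)) ε s ≤
      1 / δ * ∑ ε : Fin m → Bool, absSup f ε (fun i => (s i).1) := by
  have hm' : (0 : ℝ) < m := by exact_mod_cast hm
  have hB0 : 0 ≤ B := (abs_nonneg _).trans (hB 0 (s ⟨0, hm⟩).1)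
  have hc := contraction (m := m) (fun _ : ℕ => (0 : ℝ))
    (fun k i => ramp (((s i).2 ^ 2 - f k (s i).1) / δ)) (fun k i => f k (s i).1 / δ)
    (C := 1 + B / δ) (K := 0) (by simp)
    (fun k i => (abs_ramp_le _).trans (by have : 0 ≤ B / δ := by positivity
                                          linarith))
    (fun k i => by
      rw [abs_div, abs_of_pos hδ]
      have : |f k (s i).1| / δ ≤ B / δ := by gcongr; exact hB _ _
      linarith)
    (fun k l i => (abs_ramp_sub_le _ _).trans (le_of_eq (by
      rw [← sub_div, ← sub_div, abs_div, abs_div, abs_sub_comm (f k _)]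
      congr 2; ring)))
  simp only [zero_add] at hc
  have hl : ∀ ε : Fin m → Bool,
      signedSup (fun k (q : 𝒳 × ℝ) => ramp ((q.2 ^ 2 - f k q.1) / δ)) ε s =
      (1 / m : ℝ) * ⨆ k, ∑ i, sgn (ε i) * ramp (((s i).2 ^ 2 - f k (s i).1) / δ) := fun ε => by
    rw [Real.mul_iSup_of_nonneg (by positivity)]
    rfl
  simp only [hl]
  rw [← Finset.mul_sum]
  refine (mul_le_mul_of_nonneg_left hc (by positivity)).trans ?_
  rw [Finset.mul_sum, Finset.mul_sum]
  refine Finset.sum_le_sum fun ε _ => ?_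
  rw [Real.mul_iSup_of_nonneg (by positivity)]
  refine ciSup_le fun k => ?_
  have hb : BddAbove (Set.range fun k => |(1 / m : ℝ) * ∑ i, sgn (ε i) * f k (s i).1|) :=
    bddAbove_of_le (C := B) fun k => abs_signed_avg_le hm ε _ fun i => hB k _
  calc (1 / m : ℝ) * ∑ i, sgn (ε i) * (f k (s i).1 / δ)
      = 1 / δ * ((1 / m : ℝ) * ∑ i, sgn (ε i) * f k (s i).1) := by
        simp only [← mul_div_assoc]
        rw [← Finset.sum_div]
        ring
    _ ≤ 1 / δ * |(1 / m : ℝ) * ∑ i, sgn (ε i) * f k (s i).1| := by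
        gcongr
        exact le_abs_self _
    _ ≤ _ := by
        gcongr
        exact le_ciSup hb k

/-- The expected uniform deviation of the ramp losses is at most `(2/δ) R_m`. -/
lemma expected_deviation_le {𝒳 : Type*} [MeasurableSpace 𝒳] (P : Measure (𝒳 × ℝ))
    [IsProbabilityMeasure P] {m : ℕ} (hm : 0 < m) {f : ℕ → 𝒳 → ℝ} (hf : ∀ k, Measurable (f k))
    {B : ℝ} (hB : ∀ k x, |f k x| ≤ B) {δ : ℝ} (hδ : 0 < δ) :
    ∫ s, ⨆ k, (∫ q, ramp ((q.2 ^ 2 - f k q.1) / δ) ∂P -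
        (1 / m : ℝ) * ∑ i, ramp (((s i).2 ^ 2 - f k (s i).1) / δ))
        ∂(Measure.pi fun _ : Fin m => P) ≤
      2 / δ * rademacher m (Set.range f) (P.map Prod.fst) := by
  have : IsProbabilityMeasure (P.map Prod.fst) :=
    Measure.isProbabilityMeasure_map measurable_fst.aemeasurable
  set φ : ℕ → 𝒳 × ℝ → ℝ := fun k q => ramp ((q.2 ^ 2 - f k q.1) / δ) with hφdef
  have hφ : ∀ k, Measurable (φ k) := fun k => measurable_ramp.comp (by
    have := hf k
    fun_prop)
  have hφ1 : ∀ k q, |φ k q| ≤ 1 := fun k q => abs_ramp_le _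
  refine (symmetrization P hm hφ hφ1).trans ?_
  have hpush : ∀ ε : Fin m → Bool,
      ∫ x, absSup f ε x ∂(Measure.pi fun _ : Fin m => P.map Prod.fst) =
      ∫ s, absSup f ε (fun i => (s i).1) ∂(Measure.pi fun _ : Fin m => P) := by
    intro ε
    have hmp : MeasurePreserving (fun (s : Fin m → 𝒳 × ℝ) i => (s i).1)
        (Measure.pi fun _ => P) (Measure.pi fun _ => P.map Prod.fst) :=
      measurePreserving_pi (fun _ => P) (fun _ => P.map Prod.fst)
        (f := fun _ => Prod.fst) fun _ => measurable_fst.measurePreserving P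
    rw [← hmp.map_eq, integral_map hmp.measurable.aemeasurable
      (measurable_absSup hf ε).aestronglyMeasurable]
  have hSi : ∀ ε : Fin m → Bool, Integrable (signedSup φ ε) (Measure.pi fun _ : Fin m => P) :=
    fun ε => integrable_of_abs_le (measurable_signedSup hφ ε) (C := 1) fun s =>
      abs_iSup_le fun k => abs_signed_avg_le hm ε _ fun i => hφ1 k _
  have hAi : ∀ ε : Fin m → Bool, Integrable
      (fun s : Fin m → 𝒳 × ℝ => absSup f ε (fun i => (s i).1)) (Measure.pi fun _ => P) :=
    fun ε => integrable_of_abs_le ((measurable_absSup hf ε).comp (by fun_prop)) fun s =>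
      abs_absSup_le hm hB _ _
  have hsum : ∑ ε : Fin m → Bool, ∫ s, signedSup φ ε s ∂(Measure.pi fun _ : Fin m => P) ≤
      1 / δ * ∑ ε : Fin m → Bool,
        ∫ s, absSup f ε (fun i => (s i).1) ∂(Measure.pi fun _ : Fin m => P) := by
    rw [← integral_finsetSum _ fun ε _ => hSi ε, ← integral_finsetSum _ fun ε _ => hAi ε,
      ← integral_const_mul]
    exact integral_mono (integrable_finsetSum _ fun ε _ => hSi ε)
      ((integrable_finsetSum _ fun ε _ => hAi ε).const_mul _)
      fun s => sum_signedSup_le hm hB hδ s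
  rw [rademacher_range _ hm hf hB]
  simp only [hpush]
  have := mul_le_mul_of_nonneg_left hsum (by positivity : (0 : ℝ) ≤ 2 * (1 / 2) ^ m)
  calc _ = 2 * (1 / 2) ^ m * ∑ ε : Fin m → Bool,
        ∫ s, signedSup φ ε s ∂(Measure.pi fun _ : Fin m => P) := by ring
    _ ≤ _ := this
    _ = _ := by ring

/-- The hard miscoverage indicator lies below the ramp loss. -/
lemma miscoverage_le {𝒳 : Type*} [MeasurableSpace 𝒳] (P : Measure (𝒳 × ℝ))
    [IsProbabilityMeasure P] {f : 𝒳 → ℝ} (hf : Measurable f) {δ : ℝ} (hδ : 0 < δ) :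
    P.real {q : 𝒳 × ℝ | f q.1 + δ ≤ q.2 ^ 2} ≤ ∫ q, ramp ((q.2 ^ 2 - f q.1) / δ) ∂P := by
  have hm : Measurable fun q : 𝒳 × ℝ => ramp ((q.2 ^ 2 - f q.1) / δ) :=
    measurable_ramp.comp (by fun_prop)
  have hset : MeasurableSet {q : 𝒳 × ℝ | f q.1 + δ ≤ q.2 ^ 2} :=
    measurableSet_le (by fun_prop) (by fun_prop)
  rw [← integral_indicator_one hset]
  refine integral_mono ((integrable_const (1 : ℝ)).indicator hset)
    (integrable_of_abs_le hm fun q => abs_ramp_le _) fun q => ?_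
  by_cases hq : f q.1 + δ ≤ q.2 ^ 2
  · rw [Set.indicator_of_mem (by exact hq)]
    have : 1 ≤ (q.2 ^ 2 - f q.1) / δ := by rw [le_div_iff₀ hδ]; linarith
    simp [ramp, this]
  · rw [Set.indicator_of_notMem (by exact hq)]
    exact ramp_nonneg _

/-- for any `𝓕`-valued function of the sample interpolating above the
squared responses, the conditional miscoverage `P_S(Y² ≥ f̂(X) + δ)` is, with probability
at least `1 − e^{−t}`, bounded by `(4/δ)(√(E[Y⁴]/m) + R_m(𝓕)) + √(t/m)`. -/
theorem stmt5 {𝒳 : Type*} [MeasurableSpace 𝒳]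
    (P_S : Measure (𝒳 × ℝ)) [IsProbabilityMeasure P_S]
    (νS : Measure 𝒳) [IsProbabilityMeasure νS] (hνS : νS = P_S.map Prod.fst)
    (hY4 : Integrable (fun p : 𝒳 × ℝ => p.2 ^ 4) P_S)
    (𝓕 : Set (𝒳 → ℝ)) (h𝓕c : 𝓕.Countable) (h𝓕m : ∀ f ∈ 𝓕, Measurable f)
    (B𝓕 : ℝ) (h𝓕b : ∀ f ∈ 𝓕, ∀ x, |f x| ≤ B𝓕)
    (m : ℕ) (hm : 0 < m) (δ : ℝ) (hδ : 0 < δ)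
    (fhat : (Fin m → 𝒳 × ℝ) → 𝒳 → ℝ)
    (hfhatF : ∀ s, fhat s ∈ 𝓕)
    (hfeas : ∀ᵐ s ∂(Measure.pi fun _ : Fin m => P_S), ∀ i, ((s i).2) ^ 2 ≤ fhat s ((s i).1))
    (t : ℝ) (ht : 0 < t) :
    1 - Real.exp (-t) ≤
      ((Measure.pi fun _ : Fin m => P_S)
        {s : Fin m → 𝒳 × ℝ |
          (P_S {q : 𝒳 × ℝ | fhat s q.1 + δ ≤ q.2 ^ 2}).toReal ≤
            4 / δ * (Real.sqrt ((∫ q : 𝒳 × ℝ, q.2 ^ 4 ∂P_S) / m) + rademacher m 𝓕 νS)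
              + Real.sqrt (t / m)}).toReal := by
  subst hνS
  obtain ⟨q₀⟩ : Nonempty (𝒳 × ℝ) := P_S.nonempty_of_neZero
  obtain ⟨f, rfl⟩ := h𝓕c.exists_eq_range ⟨_, hfhatF fun _ => q₀⟩
  have hf : ∀ k, Measurable (f k) := fun k => h𝓕m _ ⟨k, rfl⟩
  have hB : ∀ k x, |f k x| ≤ B𝓕 := fun k => h𝓕b _ ⟨k, rfl⟩
  have hm' : (0 : ℝ) < m := by exact_mod_cast hm
  set Q := (Measure.pi fun _ : Fin m => P_S) with hQ
  set φ : ℕ → 𝒳 × ℝ → ℝ := fun k q => ramp ((q.2 ^ 2 - f k q.1) / δ) with hφdef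
  have hφ : ∀ k, Measurable (φ k) := fun k => measurable_ramp.comp (by
    have := hf k
    fun_prop)
  -- `Φ` is the uniform deviation of the empirical ramp losses below their expectations.
  set Φ : (Fin m → 𝒳 × ℝ) → ℝ := fun s =>
    ⨆ k, (∫ q, φ k q ∂P_S - (1 / m : ℝ) * ∑ i, φ k (s i)) with hΦ
  have hterm : ∀ (k : ℕ) (s : Fin m → 𝒳 × ℝ), |∫ q, φ k q ∂P_S - (1 / m : ℝ) * ∑ i, φ k (s i)| ≤ 1 + 1 := by
    intro k s
    refine (abs_sub _ _).trans (add_le_add ?_ ?_)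
    · simpa using norm_integral_le_of_norm_le_const (μ := P_S) (f := φ k) (C := 1)
        (ae_of_all _ fun q => abs_ramp_le _)
    · simpa [sgn] using abs_signed_avg_le hm (fun _ => true) (fun i => φ k (s i))
        fun i => abs_ramp_le _
  have hbdd : ∀ s : Fin m → 𝒳 × ℝ, BddAbove (Set.range fun k =>
      ∫ q, φ k q ∂P_S - (1 / m : ℝ) * ∑ i, φ k (s i)) := fun s =>
    bddAbove_of_le fun k => (abs_le.1 (hterm k s)).2
  have hΦm : Measurable Φ := Measurable.iSup fun k => by
    have := hφ k
    fun_prop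
  have h0 : ∀ k q, 0 ≤ φ k q := fun k q => ramp_nonneg _
  have h1 : ∀ k q, φ k q ≤ 1 := fun k q => ramp_le_one _
  have hdiff : ∀ (s : Fin m → 𝒳 × ℝ) (i : Fin m) (z : 𝒳 × ℝ),
      Φ (Function.update s i z) - Φ s ≤ 1 / m := fun s i z =>
    deviation_update (φ := φ) (e := fun k => ∫ q, φ k q ∂P_S) h0 h1 (hbdd s) i z
  have hΦb : ∀ s, |Φ s| ≤ 1 + 1 := fun s => abs_iSup_le fun k => hterm k s
  have hdev := mcdiarmid P_S hm hΦm hΦb hdiff (Real.sqrt_nonneg (t / m))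
  have hexp : Real.exp (-2 * m * Real.sqrt (t / m) ^ 2) ≤ Real.exp (-t) := by
    rw [Real.sq_sqrt (by positivity), Real.exp_le_exp]
    have : -2 * m * (t / m) = -2 * t := by field_simp
    linarith
  have hE : ∫ s, Φ s ∂Q ≤ 2 / δ * rademacher m (Set.range f) (P_S.map Prod.fst) :=
    expected_deviation_le P_S hm hf hB hδ
  have hR : 0 ≤ rademacher m (Set.range f) (P_S.map Prod.fst) :=
    integral_nonneg fun p => Real.sSup_nonneg (by rintro _ ⟨g, -, rfl⟩; exact abs_nonneg _)
  have hN : Q.real {s | ¬ ∀ i, ((s i).2) ^ 2 ≤ fhat s ((s i).1)} = 0 := by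
    rw [measureReal_def, ae_iff.1 hfeas]; rfl
  -- The favourable event need not be measurable, so its outer measure is bounded below through a
  -- cover of the whole space.
  have hcover : Set.univ ⊆ {s : Fin m → 𝒳 × ℝ |
          (P_S {q : 𝒳 × ℝ | fhat s q.1 + δ ≤ q.2 ^ 2}).toReal ≤
            4 / δ * (Real.sqrt ((∫ q : 𝒳 × ℝ, q.2 ^ 4 ∂P_S) / m) +
              rademacher m (Set.range f) (P_S.map Prod.fst)) + Real.sqrt (t / m)} ∪
      ({s | Real.sqrt (t / m) ≤ Φ s - ∫ s, Φ s ∂Q} ∪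
        {s | ¬ ∀ i, ((s i).2) ^ 2 ≤ fhat s ((s i).1)}) := by
    intro s _
    by_cases h1 : Real.sqrt (t / m) ≤ Φ s - ∫ s, Φ s ∂Q
    · exact Or.inr (Or.inl h1)
    by_cases h2 : ∀ i, ((s i).2) ^ 2 ≤ fhat s ((s i).1)
    swap
    · exact Or.inr (Or.inr h2)
    refine Or.inl ?_
    obtain ⟨k, hk⟩ := hfhatF s
    simp only [Set.mem_ofPred_eq, ← hk] at h2 ⊢
    -- Feasibility makes every empirical ramp loss of the selected function vanish.
    have hzero : ∑ i, φ k (s i) = 0 := Finset.sum_eq_zero fun i _ => by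
      have : ((s i).2 ^ 2 - f k (s i).1) / δ ≤ 0 :=
        div_nonpos_of_nonpos_of_nonneg (by linarith [h2 i]) hδ.le
      exact max_eq_left ((min_le_right _ _).trans this)
    have hle : ∫ q, φ k q ∂P_S ≤ Φ s := by
      have := le_ciSup (hbdd s) k
      simpa only [hzero, mul_zero, sub_zero] using this
    have hp := miscoverage_le P_S (hf k) hδ
    rw [measureReal_def] at hp
    have hsq : 0 ≤ 4 / δ * Real.sqrt ((∫ q : 𝒳 × ℝ, q.2 ^ 4 ∂P_S) / m) := by positivity
    have h24 : 2 / δ * rademacher m (Set.range f) (P_S.map Prod.fst) ≤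
        4 / δ * rademacher m (Set.range f) (P_S.map Prod.fst) := by
      gcongr
      norm_num
    rw [mul_add]
    linarith
  have hfin := (measureReal_mono (μ := Q) hcover).trans (measureReal_union_le _ _)
  have hfin' := hfin.trans (add_le_add_right (measureReal_union_le _ _) _)
  rw [hN, probReal_univ] at hfin'
  simp only [← measureReal_def] at hfin' ⊢
  linarith
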